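/- Let X be ℝ² equipped with the supremum norm ‖(a, b)‖ = max{|a|, |b|} and let x₀ = (1, 0). Then β(x₀) = 1, and for every α ∈ (0, 1) the vector y = (α, 1) ∈ S_X satisfies min{‖x₀ − y‖, ‖x₀ + y‖} = 1 = β(x₀) while x₀ is not isosceles orthogonal to y (indeed ‖x₀ + y‖ = 1 + α ≠ 1 = ‖x₀ − y‖). -/

import Mathlib

/-!
In `ℝ × F` with the maximum norm, the two first coordinates of `(a, 0) ± (b, v)` have absolute
values whose minimum is `||a| - |b||`, while the second coordinates both have norm `‖v‖`. Hence
`min ‖(a, 0) + (b, v)‖ ‖(a, 0) - (b, v)‖ = max ||a| - |b|| ‖v‖`. For unit vectors `(a, 0)` and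
`(b, v)` this is at most `1`, with equality as soon as `‖v‖ = 1`, whatever `b` is. The two norms
themselves are `max |a + b| ‖v‖` and `max |a - b| ‖v‖`, and they differ when `a = 1`, `‖v‖ = 1`
and `0 < b ≤ 1`.
-/

open Set

section Definitions

variable {E : Type*} [SeminormedAddCommGroup E]

/-- The local James constant `β(x)`, the supremum of `min ‖x + y‖ ‖x - y‖` over unit vectors `y`.
It is defined here for all `x`, not only for unit vectors, and as a real `sSup` it is `0` when
there is no unit vector. -/
noncomputable def localJamesConstant (x : E) : ℝ :=
  sSup {r : ℝ | ∃ y : E, ‖y‖ = 1 ∧ r = min ‖x + y‖ ‖x - y‖}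

/-- Isosceles orthogonality `x ⊥_I y`: the two diagonals of the parallelogram spanned by `x` and
`y` have the same length. -/
def IsoscelesOrthogonal (x y : E) : Prop :=
  ‖x + y‖ = ‖x - y‖

end Definitions

theorem min_abs_add_abs_sub {G : Type*} [AddCommGroup G] [LinearOrder G] [IsOrderedAddMonoid G]
    (a b : G) : min |a + b| |a - b| = |(|a| - |b|)| := by
  refine le_antisymm ?_ (le_min ?_ (abs_abs_sub_abs_le a b))
  · rcases abs_choice a with ha | ha <;> rcases abs_choice b with hb | hb <;> rw [ha, hb]
    · exact min_le_right _ _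
    · rw [sub_neg_eq_add]
      exact min_le_left _ _
    · rw [← neg_add', abs_neg]
      exact min_le_left _ _
    · rw [neg_sub_neg, abs_sub_comm]
      exact min_le_right _ _
  · simpa only [abs_neg, sub_neg_eq_add] using abs_abs_sub_abs_le a (-b)

section Prod

variable {E F : Type*} [SeminormedAddCommGroup E] [SeminormedAddCommGroup F]

theorem norm_mk_zero_add (a : E) (y : E × F) : ‖(a, 0) + y‖ = max ‖a + y.1‖ ‖y.2‖ := by
  simp only [Prod.norm_def, Prod.fst_add, Prod.snd_add, zero_add]

theorem norm_mk_zero_sub (a : E) (y : E × F) : ‖(a, 0) - y‖ = max ‖a - y.1‖ ‖y.2‖ := by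
  simp only [Prod.norm_def, Prod.fst_sub, Prod.snd_sub, zero_sub, norm_neg]

theorem min_norm_mk_zero_add_sub (a : ℝ) (y : ℝ × F) :
    min ‖(a, 0) + y‖ ‖(a, 0) - y‖ = max |(|a| - |y.1|)| ‖y.2‖ := by
  rw [norm_mk_zero_add, norm_mk_zero_sub, ← max_min_distrib_right, Real.norm_eq_abs,
    Real.norm_eq_abs, min_abs_add_abs_sub]

theorem min_norm_mk_zero_add_sub_le (a : ℝ) (y : ℝ × F) :
    min ‖(a, 0) + y‖ ‖(a, 0) - y‖ ≤ max |a| ‖y‖ := by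
  rw [min_norm_mk_zero_add_sub]
  have hfst : |(|a| - |y.1|)| ≤ max |a| |y.1| :=
    abs_sub_le_of_nonneg_of_le (abs_nonneg _) (le_max_left _ _) (abs_nonneg _) (le_max_right _ _)
  exact max_le (hfst.trans (max_le_max_left _ (norm_fst_le y)))
    ((norm_snd_le y).trans (le_max_right _ _))

theorem localJamesConstant_mk_zero (a : ℝ) {v : F} (hv : ‖v‖ = 1) :
    localJamesConstant ((a, 0) : ℝ × F) = max |a| 1 := by
  refine IsGreatest.csSup_eq ⟨⟨(0, v), ?_, ?_⟩, ?_⟩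
  · simp [Prod.norm_def, hv]
  · simp [hv]
  · rintro _ ⟨y, hy, rfl⟩
    exact hy ▸ min_norm_mk_zero_add_sub_le a y

theorem stmt19_general {v : F} (hv : ‖v‖ = 1) :
    localJamesConstant ((1, 0) : ℝ × F) = 1 ∧
    ∀ α : ℝ, α ∈ Ioc (0 : ℝ) 1 →
      ‖(α, v)‖ = 1 ∧
      min ‖((1 : ℝ), (0 : F)) - (α, v)‖ ‖((1 : ℝ), (0 : F)) + (α, v)‖ = 1 ∧
      ‖((1 : ℝ), (0 : F)) + (α, v)‖ = 1 + α ∧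
      ‖((1 : ℝ), (0 : F)) - (α, v)‖ = 1 ∧
      ¬ IsoscelesOrthogonal ((1 : ℝ), (0 : F)) (α, v) := by
  refine ⟨by rw [localJamesConstant_mk_zero 1 hv, abs_one, max_self], ?_⟩
  rintro α ⟨hα₀, hα₁⟩
  have hunit : ‖(α, v)‖ = 1 := by
    rw [Prod.norm_mk, hv, Real.norm_of_nonneg hα₀.le, max_eq_right hα₁]
  have hadd : ‖((1 : ℝ), (0 : F)) + (α, v)‖ = 1 + α := by
    rw [norm_mk_zero_add, hv, Real.norm_of_nonneg (by linarith), max_eq_left (by linarith)]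
  have hsub : ‖((1 : ℝ), (0 : F)) - (α, v)‖ = 1 := by
    rw [norm_mk_zero_sub, hv, Real.norm_of_nonneg (by linarith), max_eq_right (by linarith)]
  refine ⟨hunit, ?_, hadd, hsub, ?_⟩
  · rw [hadd, hsub, min_eq_left (by linarith)]
  · rw [IsoscelesOrthogonal, hadd, hsub]
    linarith

end Prod

/-- In `ℝ²` with the supremum norm (the product norm on `ℝ × ℝ`), for
`x₀ = (1, 0)` one has `β(x₀) = 1`, and for every `α ∈ (0, 1)` the vector `y = (α, 1)` is a unit
vector satisfying `min {‖x₀ - y‖, ‖x₀ + y‖} = 1 = β(x₀)` while `x₀` is not isosceles orthogonal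
to `y`: indeed `‖x₀ + y‖ = 1 + α ≠ 1 = ‖x₀ - y‖`. -/
theorem stmt19 :
    sSup {r : ℝ | ∃ y : ℝ × ℝ, ‖y‖ = 1 ∧
        r = min ‖((1 : ℝ), (0 : ℝ)) + y‖ ‖((1 : ℝ), (0 : ℝ)) - y‖} = 1 ∧
    ∀ α : ℝ, α ∈ Set.Ioo (0 : ℝ) 1 →
      ‖((α, 1) : ℝ × ℝ)‖ = 1 ∧
      min ‖((1 : ℝ), (0 : ℝ)) - ((α, 1) : ℝ × ℝ)‖ ‖((1 : ℝ), (0 : ℝ)) + ((α, 1) : ℝ × ℝ)‖ = 1 ∧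
      ‖((1 : ℝ), (0 : ℝ)) + ((α, 1) : ℝ × ℝ)‖ = 1 + α ∧
      ‖((1 : ℝ), (0 : ℝ)) - ((α, 1) : ℝ × ℝ)‖ = 1 ∧
      ‖((1 : ℝ), (0 : ℝ)) + ((α, 1) : ℝ × ℝ)‖ ≠ ‖((1 : ℝ), (0 : ℝ)) - ((α, 1) : ℝ × ℝ)‖ := by
  obtain ⟨hβ, h⟩ := stmt19_general (F := ℝ) norm_one
  exact ⟨hβ, fun α hα ↦ h α (Ioo_subset_Ioc_self hα)⟩
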